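/- Let G be a quantitative two-player reachability game and let d ≥ (|Π|+1)·2·|V|. If there exists a secure equilibrium of a certain type in the truncated game G^d, then there exists a finite-memory secure equilibrium of the same type in G. -/

import Mathlib

/-- A quantitative multiplayer reachability game: a finite directed graph whose
vertex set is partitioned among the players (via `owner`), with an initial vertex `v0`,
an edge relation `E` such that every vertex has an outgoing edge, and a goal set
`goal i` for each player `i`. -/
structure ReachGame (P : Type) (V : Type) where
  owner : V → P
  v0 : V
  E : V → V → Prop
  total : ∀ v : V, ∃ w : V, E v w
  goal : P → Set V

namespace ReachGame

variable {P V : Type} [DecidableEq P] (G : ReachGame P V)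

/-- The last vertex of a history (with default `v0`). -/
def lastV (h : List V) : V := h.getLastD G.v0

/-- A history: a nonempty finite path in the graph starting at `v0`. -/
def IsHistory (h : List V) : Prop :=
  h ≠ [] ∧ h.head? = some G.v0 ∧ List.Chain' G.E h

/-- A play: an infinite path starting at `v0`. -/
def IsPlay (ρ : ℕ → V) : Prop :=
  ρ 0 = G.v0 ∧ ∀ k : ℕ, G.E (ρ k) (ρ (k + 1))

/-- `σ` is a (total encoding of a) strategy of player `i`: on every history ending in
a vertex owned by `i` it chooses a successor along an edge. -/
def IsStrategy (i : P) (σ : List V → V) : Prop :=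
  ∀ h : List V, G.IsHistory h → G.owner (G.lastV h) = i → G.E (G.lastV h) (σ h)

/-- A strategy profile: one strategy per player. -/
def IsProfile (prof : P → List V → V) : Prop :=
  ∀ i : P, G.IsStrategy i (prof i)

/-- The history of length `n` (i.e. with `n` edges) obtained by letting the players
follow the profile `prof` from `v0`. -/
def outHist (prof : P → List V → V) : ℕ → List V
  | 0 => [G.v0]
  | n + 1 => outHist prof n ++ [prof (G.owner (G.lastV (outHist prof n))) (outHist prof n)]

/-- The outcome play of the strategy profile `prof`. -/
def outcome (prof : P → List V → V) (n : ℕ) : V :=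
  G.lastV (G.outHist prof n)

/-- The cost of player `i` for the play `ρ`: the least `l` with `ρ l ∈ goal i`,
and `⊤` (`+∞`) if there is no such `l`. -/
noncomputable def cost (i : P) (ρ : ℕ → V) : ℕ∞ :=
  sInf {n : ℕ∞ | ∃ l : ℕ, n = (l : ℕ∞) ∧ ρ l ∈ G.goal i}

/-- Nash equilibrium: no player can strictly decrease his cost by a unilateral
deviation. -/
def IsNash (prof : P → List V → V) : Prop :=
  ∀ (j : P) (σ' : List V → V), G.IsStrategy j σ' →
    G.cost j (G.outcome prof) ≤ G.cost j (G.outcome (Function.update prof j σ'))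

/-- `h ≈_σ h'` : the strategy `σ` of player `i` behaves the same after `h` and `h'`,
i.e. `σ (h ++ δ) = σ (h' ++ δ)` for every suffix `δ` making both `h ++ δ` and
`h' ++ δ` histories ending in a vertex of player `i`. -/
def MemEq (i : P) (σ : List V → V) (h h' : List V) : Prop :=
  ∀ δ : List V,
    G.IsHistory (h ++ δ) → G.owner (G.lastV (h ++ δ)) = i →
    G.IsHistory (h' ++ δ) → G.owner (G.lastV (h' ++ δ)) = i →
    σ (h ++ δ) = σ (h' ++ δ)

/-- A strategy of player `i` is finite-memory if the relation `≈_σ` has finitely many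
equivalence classes on histories, i.e. there is a finite set of histories meeting
every class. -/
def FiniteMemory (i : P) (σ : List V → V) : Prop :=
  ∃ S : Finset (List V), ∀ h : List V, G.IsHistory h →
    ∃ h' ∈ S, G.IsHistory h' ∧ G.MemEq i σ h h'

/-- A profile is finite-memory if each of its strategies is. -/
def FiniteMemoryProfile (prof : P → List V → V) : Prop :=
  ∀ i : P, G.FiniteMemory i (prof i)

/-- `Visit h`: the set of players whose goal set is visited by the finite path `h`. -/
def visitL (h : List V) : Set P := {i : P | ∃ v ∈ h, v ∈ G.goal i}

/-- The type of a strategy profile: the set of players whose goal set is visited by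
the outcome. -/
def typeOf (prof : P → List V → V) : Set P :=
  {i : P | ∃ l : ℕ, G.outcome prof l ∈ G.goal i}

/-! ### The truncated game `G^d` -/

/-- A strategy of player `i` in the truncated game `G^d` : it chooses a successor on
every history with less than `d` edges (list length `≤ d`) ending in a vertex of `i`. -/
def IsStrategyTrunc (d : ℕ) (i : P) (σ : List V → V) : Prop :=
  ∀ h : List V, G.IsHistory h → h.length ≤ d → G.owner (G.lastV h) = i →
    G.E (G.lastV h) (σ h)

/-- A strategy profile of the truncated game `G^d`. -/
def IsProfileTrunc (d : ℕ) (prof : P → List V → V) : Prop :=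
  ∀ i : P, G.IsStrategyTrunc d i (prof i)

/-- The cost of player `i` for a finite play `h` (a list of vertices): the least
position of `h` lying in `goal i`, and `⊤` if `goal i` is not visited. -/
noncomputable def costList (i : P) (h : List V) : ℕ∞ :=
  sInf {n : ℕ∞ | ∃ l : ℕ, n = (l : ℕ∞) ∧ l < h.length ∧ h.getD l G.v0 ∈ G.goal i}

/-- Nash equilibrium of the truncated game `G^d` (whose plays are the histories with
exactly `d` edges). -/
def IsNashTrunc (d : ℕ) (prof : P → List V → V) : Prop :=
  ∀ (j : P) (σ' : List V → V), G.IsStrategyTrunc d j σ' →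
    G.costList j (G.outHist prof d) ≤
      G.costList j (G.outHist (Function.update prof j σ') d)

/-- The type of a strategy profile of the truncated game `G^d`. -/
def typeOfTrunc (d : ℕ) (prof : P → List V → V) : Set P :=
  G.visitL (G.outHist prof d)

end ReachGame

/-- `(x₁,x₂) ≺₁ (y₁,y₂)` iff `x₁ > y₁`, or `x₁ = y₁` and `x₂ < y₂` :
player 1 prefers the cost profile `y` to `x`. -/
def prec1 (x y : ℕ∞ × ℕ∞) : Prop := y.1 < x.1 ∨ (x.1 = y.1 ∧ x.2 < y.2)

/-- `(x₁,x₂) ≺₂ (y₁,y₂)` iff `x₂ > y₂`, or `x₂ = y₂` and `x₁ < y₁` :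
player 2 prefers the cost profile `y` to `x`. -/
def prec2 (x y : ℕ∞ × ℕ∞) : Prop := y.2 < x.2 ∨ (x.2 = y.2 ∧ x.1 < y.1)

namespace ReachGame

variable {V : Type} (G : ReachGame (Fin 2) V)

/-- The pair of costs of the two players for the play `ρ`. -/
noncomputable def costPair (ρ : ℕ → V) : ℕ∞ × ℕ∞ := (G.cost 0 ρ, G.cost 1 ρ)

/-- Secure equilibrium: no player `j` has a `≺ⱼ`-profitable deviation. -/
def IsSecure (prof : Fin 2 → List V → V) : Prop :=
  (∀ σ' : List V → V, G.IsStrategy 0 σ' →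
    ¬ prec1 (G.costPair (G.outcome prof))
        (G.costPair (G.outcome (Function.update prof 0 σ')))) ∧
  (∀ σ' : List V → V, G.IsStrategy 1 σ' →
    ¬ prec2 (G.costPair (G.outcome prof))
        (G.costPair (G.outcome (Function.update prof 1 σ'))))

/-- The pair of costs of the two players for a finite play `h`. -/
noncomputable def costListPair (h : List V) : ℕ∞ × ℕ∞ := (G.costList 0 h, G.costList 1 h)

/-- Secure equilibrium of the truncated game `G^d`. -/
def IsSecureTrunc (d : ℕ) (prof : Fin 2 → List V → V) : Prop :=
  (∀ σ' : List V → V, G.IsStrategyTrunc d 0 σ' →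
    ¬ prec1 (G.costListPair (G.outHist prof d))
        (G.costListPair (G.outHist (Function.update prof 0 σ') d))) ∧
  (∀ σ' : List V → V, G.IsStrategyTrunc d 1 σ' →
    ¬ prec2 (G.costListPair (G.outHist prof d))
        (G.costListPair (G.outHist (Function.update prof 1 σ') d)))

end ReachGame

/-!
Each player follows the given equilibrium of `G^d` for a while and then punishes the other player
positionally: he keeps the play outside the region from which the opponent can force a visit to the
opponent's goal. Inside that region the opponent can force the visit within `|V|` moves.

If the opponent reaches his goal in the equilibrium, he does so by time `d`, and the equilibrium is
followed up to time `d`: within `d` moves no deviation pays, and afterwards it is too late to gain.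
If the opponent does not reach his goal, punishment starts at time `|V|`. No deviation can have
entered the opponent's winning region by then, for he could have completed it to a visit before time
`2|V| ≤ d`. A deviation cannot harm the punisher either: if his cost is finite, then he can force
his goal from `v₀`, since otherwise the opponent could keep him from it at no expense, and so, by
equilibrium, his cost is at most `|V|` against every strategy of the opponent.
-/

namespace ReachGame

section Multiplayer

variable {P V : Type} {G : ReachGame P V}

/-! ### Strategies and outcomes -/

theorem IsStrategy.isStrategyTrunc {i : P} {σ : List V → V} (hσ : G.IsStrategy i σ) (d : ℕ) :
    G.IsStrategyTrunc d i σ :=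
  fun h hist _ owned => hσ h hist owned

theorem IsProfile.isProfileTrunc {p : P → List V → V} (hp : G.IsProfile p) (d : ℕ) :
    G.IsProfileTrunc d p :=
  fun i => (hp i).isStrategyTrunc d

theorem IsProfile.update [DecidableEq P] {p : P → List V → V} (hp : G.IsProfile p) {i : P}
    {σ : List V → V} (hσ : G.IsStrategy i σ) : G.IsProfile (Function.update p i σ) :=
  (Function.forall_update_iff p G.IsStrategy).2 ⟨hσ, fun j _ => hp j⟩

theorem IsProfileTrunc.update [DecidableEq P] {d : ℕ} {p : P → List V → V}
    (hp : G.IsProfileTrunc d p) {i : P} {σ : List V → V} (hσ : G.IsStrategyTrunc d i σ) :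
    G.IsProfileTrunc d (Function.update p i σ) :=
  (Function.forall_update_iff p (G.IsStrategyTrunc d)).2 ⟨hσ, fun j _ => hp j⟩

theorem IsHistory.concat {h : List V} {v : V} (hist : G.IsHistory h) (edge : G.E (G.lastV h) v) :
    G.IsHistory (h ++ [v]) := by
  obtain ⟨-, head, chain⟩ := hist
  refine ⟨by simp, by simp [List.head?_append, head], List.isChain_append.2 ⟨chain, by simp, ?_⟩⟩
  intro x hx y hy
  obtain rfl : v = y := by simpa using hy
  have last : G.lastV h = x := by simp [lastV, Option.mem_def.1 hx]
  exact last ▸ edge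

theorem outcome_succ (p : P → List V → V) (n : ℕ) :
    G.outcome p (n + 1) = p (G.owner (G.outcome p n)) (G.outHist p n) := by
  simp [outcome, outHist, lastV]

theorem outHist_eq_map_range (p : P → List V → V) (n : ℕ) :
    G.outHist p n = (List.range (n + 1)).map (G.outcome p) := by
  induction n with
  | zero => rfl
  | succ n ih => rw [List.range_succ, List.map_append, ← ih, List.map_singleton, outcome_succ]; rfl

theorem length_outHist (p : P → List V → V) (n : ℕ) : (G.outHist p n).length = n + 1 := by
  simp [outHist_eq_map_range]

theorem outHist_congr {p q : P → List V → V} {n : ℕ}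
    (hpq : ∀ i h, h.length ≤ n → p i h = q i h) : G.outHist p n = G.outHist q n := by
  induction n with
  | zero => rfl
  | succ n ih =>
    have agree : G.outHist p n = G.outHist q n := ih fun i h len => hpq i h (by omega)
    simp only [outHist, agree, hpq _ _ (length_outHist q n).le]

theorem outcome_congr {p q : P → List V → V} {n : ℕ}
    (hpq : ∀ i h, h.length ≤ n → p i h = q i h) {k : ℕ} (hk : k ≤ n) :
    G.outcome p k = G.outcome q k :=
  congrArg G.lastV (outHist_congr fun i h len => hpq i h (len.trans hk))

theorem IsProfileTrunc.isHistory_outHist {d n : ℕ} {p : P → List V → V}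
    (hp : G.IsProfileTrunc d p) (hn : n ≤ d) : G.IsHistory (G.outHist p n) := by
  induction n with
  | zero => exact ⟨by simp [outHist], rfl, List.isChain_singleton _⟩
  | succ n ih =>
    have hist := ih (by omega)
    exact hist.concat (hp _ _ hist (by rw [length_outHist]; exact hn) rfl)

theorem IsProfileTrunc.edge_outcome {d n : ℕ} {p : P → List V → V} (hp : G.IsProfileTrunc d p)
    (hn : n < d) : G.E (G.outcome p n) (G.outcome p (n + 1)) := by
  rw [outcome_succ]
  exact hp _ _ (hp.isHistory_outHist hn.le) (by rw [length_outHist]; exact hn) rfl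

/-- The strategy that makes the moves at times `0, …, m - 1` according to `σ` and all later moves
according to `σ'`. A history on which the move at time `k` is chosen is a list of `k + 1`
vertices. -/
def switchAfter (m : ℕ) (σ σ' : List V → V) (h : List V) : V :=
  if h.length ≤ m then σ h else σ' h

theorem switchAfter_of_length_le {m : ℕ} {σ σ' : List V → V} {h : List V} (hm : h.length ≤ m) :
    switchAfter m σ σ' h = σ h :=
  if_pos hm

theorem switchAfter_of_lt_length {m : ℕ} {σ σ' : List V → V} {h : List V} (hm : m < h.length) :
    switchAfter m σ σ' h = σ' h :=
  if_neg hm.not_ge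

theorem IsStrategyTrunc.switchAfter {d m : ℕ} {i : P} {σ σ' : List V → V}
    (hσ : G.IsStrategyTrunc d i σ) (hσ' : G.IsStrategyTrunc d i σ') :
    G.IsStrategyTrunc d i (switchAfter m σ σ') := by
  intro h hist len owned
  unfold ReachGame.switchAfter
  split_ifs
  exacts [hσ h hist len owned, hσ' h hist len owned]

theorem IsStrategyTrunc.isStrategy_switchAfter {d m : ℕ} {i : P} {σ σ' : List V → V}
    (hσ : G.IsStrategyTrunc d i σ) (hm : m ≤ d) (hσ' : G.IsStrategy i σ') :
    G.IsStrategy i (ReachGame.switchAfter m σ σ') := by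
  intro h hist owned
  unfold ReachGame.switchAfter
  split_ifs with len
  exacts [hσ h hist (len.trans hm) owned, hσ' h hist owned]

theorem outcome_update_switchAfter [DecidableEq P] {p : P → List V → V} {i : P} {m k : ℕ}
    {σ' : List V → V} (hk : k ≤ m) :
    G.outcome (Function.update p i (switchAfter m (p i) σ')) k = G.outcome p k := by
  refine outcome_congr (fun j h len => ?_) hk
  rcases eq_or_ne j i with rfl | hj
  · rw [Function.update_self, switchAfter_of_length_le len]
  · rw [Function.update_of_ne hj]

/-! ### Finite memory -/

theorem finiteMemory_of_finite_image {M : Type*} {i : P} {σ : List V → V} (μ : List V → M)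
    (finite : (μ '' {h | G.IsHistory h}).Finite)
    (memEq : ∀ h h', μ h = μ h' → G.MemEq i σ h h') : G.FiniteMemory i σ := by
  obtain ⟨S, S_sub, S_bij⟩ := Set.exists_subset_bijOn {h | G.IsHistory h} μ
  have S_finite : S.Finite := S_bij.finite_iff_finite.2 finite
  refine ⟨S_finite.toFinset, fun h hist => ?_⟩
  obtain ⟨h', h'_mem, h'_eq⟩ := S_bij.surjOn ⟨h, hist, rfl⟩
  exact ⟨h', S_finite.mem_toFinset.2 h'_mem, S_sub h'_mem, memEq h h' h'_eq.symm⟩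

theorem lastV_append_congr {h h' : List V} (last : G.lastV h = G.lastV h') (δ : List V) :
    G.lastV (h ++ δ) = G.lastV (h' ++ δ) := by
  rcases List.eq_nil_or_concat δ with rfl | ⟨δ', v, rfl⟩
  · simpa using last
  · simp [lastV]

theorem finiteMemory_switchAfter_positional [Finite V] (i : P) (m : ℕ) (σ : List V → V)
    (f : V → V) : G.FiniteMemory i (switchAfter m σ fun h => f (G.lastV h)) := by
  let μ : List V → List V ⊕ V := fun h => if h.length ≤ m then .inl h else .inr (G.lastV h)
  have range_sub : Set.range μ ⊆ Sum.inl '' {h | h.length ≤ m} ∪ Set.range Sum.inr := by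
    rintro _ ⟨h, rfl⟩
    by_cases len : h.length ≤ m <;> simp [μ, len]
  have range_finite : (Set.range μ).Finite :=
    (((List.finite_length_le V m).image _).union (Set.finite_range _)).subset range_sub
  refine finiteMemory_of_finite_image μ (range_finite.subset (Set.image_subset_range _ _)) ?_
  intro h h' hμ δ _ _ _ _
  by_cases len : h.length ≤ m <;> by_cases len' : h'.length ≤ m <;>
    simp only [μ, len, len', if_true, if_false, Sum.inl.injEq, Sum.inr.injEq, reduceCtorEq] at hμ
  · rw [hμ]
  · rw [switchAfter_of_lt_length (by grind), switchAfter_of_lt_length (by grind),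
      lastV_append_congr hμ]

/-! ### Costs -/

theorem cost_le_of_mem {i : P} {ρ : ℕ → V} {l : ℕ} (hl : ρ l ∈ G.goal i) : G.cost i ρ ≤ l :=
  sInf_le ⟨l, rfl, hl⟩

theorem exists_cost_eq {i : P} {ρ : ℕ → V} (finite : G.cost i ρ ≠ ⊤) :
    ∃ l : ℕ, G.cost i ρ = l ∧ ρ l ∈ G.goal i :=
  csInf_mem <| Set.nonempty_iff_ne_empty.2 fun empty =>
    finite ((congrArg sInf empty).trans sInf_empty)

theorem cost_le_coe_iff {i : P} {ρ : ℕ → V} {n : ℕ} :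
    G.cost i ρ ≤ n ↔ ∃ l ≤ n, ρ l ∈ G.goal i := by
  constructor
  · intro le
    obtain ⟨l, cost_eq, mem⟩ := exists_cost_eq (le.trans_lt (ENat.natCast_lt_top n)).ne
    exact ⟨l, by rwa [cost_eq, Nat.cast_le] at le, mem⟩
  · rintro ⟨l, le, mem⟩
    exact (cost_le_of_mem mem).trans (Nat.cast_le.2 le)

theorem cost_ne_top_iff {i : P} {ρ : ℕ → V} : G.cost i ρ ≠ ⊤ ↔ ∃ l, ρ l ∈ G.goal i :=
  ⟨fun finite => (exists_cost_eq finite).imp fun _ => And.right,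
    fun ⟨l, mem⟩ => ((cost_le_of_mem mem).trans_lt (ENat.natCast_lt_top l)).ne⟩

theorem cost_le_cost_of_eqOn {i : P} {ρ ρ' : ℕ → V} {n : ℕ} (eqOn : ∀ k ≤ n, ρ k = ρ' k)
    (hn : G.cost i ρ ≤ n) : G.cost i ρ' ≤ G.cost i ρ := by
  obtain ⟨l, cost_eq, mem⟩ := exists_cost_eq (hn.trans_lt (ENat.natCast_lt_top n)).ne
  rw [cost_eq, Nat.cast_le] at hn
  rw [cost_eq]
  exact cost_le_of_mem (eqOn l hn ▸ mem)

theorem costList_outHist (i : P) (p : P → List V → V) (d : ℕ) :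
    G.costList i (G.outHist p d) =
      if G.cost i (G.outcome p) ≤ d then G.cost i (G.outcome p) else ⊤ := by
  have costList_eq : G.costList i (G.outHist p d) =
      sInf {n : ℕ∞ | ∃ l : ℕ, n = l ∧ l ≤ d ∧ G.outcome p l ∈ G.goal i} := by
    simp only [costList, outHist_eq_map_range]
    congr! 6 with n l
    rw [List.length_map, List.length_range, Nat.lt_succ_iff]
    refine and_congr_right fun hl => ?_
    rw [List.getD_eq_getElem _ _ (by simpa using Nat.lt_succ_of_le hl)]
    simp
  rw [costList_eq]
  split_ifs with le
  · obtain ⟨l, cost_eq, mem⟩ := exists_cost_eq (le.trans_lt (ENat.natCast_lt_top d)).ne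
    rw [cost_eq, Nat.cast_le] at le
    refine le_antisymm (sInf_le ⟨l, cost_eq, le, mem⟩) (sInf_le_sInf ?_)
    rintro _ ⟨k, rfl, -, hk⟩
    exact ⟨k, rfl, hk⟩
  · refine sInf_eq_top.2 ?_
    rintro _ ⟨k, rfl, hkd, hk⟩
    exact absurd (cost_le_coe_iff.2 ⟨k, hkd, hk⟩) le

theorem costList_outHist_ne_top_iff {i : P} {p : P → List V → V} {d : ℕ} :
    G.costList i (G.outHist p d) ≠ ⊤ ↔ G.cost i (G.outcome p) ≤ d := by
  rw [costList_outHist]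
  split_ifs with le
  · exact iff_of_true (le.trans_lt (ENat.natCast_lt_top d)).ne le
  · exact iff_of_false (not_not.2 rfl) le

theorem costList_outHist_of_le {i : P} {p : P → List V → V} {d : ℕ}
    (le : G.cost i (G.outcome p) ≤ d) :
    G.costList i (G.outHist p d) = G.cost i (G.outcome p) := by
  rw [costList_outHist, if_pos le]

theorem cost_le_costList_outHist (i : P) (p : P → List V → V) (d : ℕ) :
    G.cost i (G.outcome p) ≤ G.costList i (G.outHist p d) := by
  rw [costList_outHist]
  split_ifs
  exacts [le_rfl, le_top]

theorem mem_typeOf_iff {i : P} {p : P → List V → V} :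
    i ∈ G.typeOf p ↔ G.cost i (G.outcome p) ≠ ⊤ :=
  cost_ne_top_iff.symm

theorem mem_typeOfTrunc_iff {i : P} {p : P → List V → V} {d : ℕ} :
    i ∈ G.typeOfTrunc d p ↔ G.costList i (G.outHist p d) ≠ ⊤ := by
  rw [costList_outHist_ne_top_iff, cost_le_coe_iff]
  simp [typeOfTrunc, visitL, outHist_eq_map_range]

/-! ### Attractors -/

/-- The controllable predecessor of `A`: the vertices from which player `i` can force the next
vertex to lie in `A`. -/
def controlPre (G : ReachGame P V) (i : P) (A : Set V) : Set V :=
  {v | (G.owner v = i ∧ ∃ w ∈ A, G.E v w) ∨ (G.owner v ≠ i ∧ ∀ w, G.E v w → w ∈ A)}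

theorem controlPre_mono (i : P) : Monotone (G.controlPre i) := by
  rintro A B hAB v (⟨owned, w, hw, edge⟩ | ⟨owned, forced⟩)
  · exact .inl ⟨owned, w, hAB hw, edge⟩
  · exact .inr ⟨owned, fun w edge => hAB (forced w edge)⟩

/-- The monotone operator whose least fixed point is the attractor of `T`. -/
def attractorStep (G : ReachGame P V) (i : P) (T : Set V) : Set V →o Set V where
  toFun A := T ∪ G.controlPre i A
  monotone' _ _ hAB := Set.union_subset_union_right T (controlPre_mono i hAB)

/-- The attractor of `T`: the vertices from which player `i` can force a visit to `T`. -/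
def attractor (G : ReachGame P V) (i : P) (T : Set V) : Set V :=
  (G.attractorStep i T).lfp

/-- The vertices from which player `i` can force a visit to `T` within `n` moves. -/
def attractorWithin (G : ReachGame P V) (i : P) (T : Set V) (n : ℕ) : Set V :=
  (G.attractorStep i T)^[n] T

theorem attractor_eq (i : P) (T : Set V) :
    G.attractor i T = T ∪ G.controlPre i (G.attractor i T) :=
  (G.attractorStep i T).map_lfp.symm

theorem attractorWithin_succ (i : P) (T : Set V) (n : ℕ) :
    G.attractorWithin i T (n + 1) = T ∪ G.controlPre i (G.attractorWithin i T n) :=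
  Function.iterate_succ_apply' _ n T

theorem attractorWithin_mono (i : P) (T : Set V) : Monotone (G.attractorWithin i T) :=
  (G.attractorStep i T).monotone.monotone_iterate_of_le_map Set.subset_union_left

theorem attractorWithin_card_succ [Finite V] (i : P) (T : Set V) :
    G.attractorWithin i T (Nat.card V + 1) = G.attractorWithin i T (Nat.card V) := by
  have eq_of_ncard_eq (n : ℕ) (h : (G.attractorWithin i T n).ncard =
      (G.attractorWithin i T (n + 1)).ncard) :
      G.attractorWithin i T n = G.attractorWithin i T (n + 1) :=
    Set.eq_of_subset_of_ncard_le (attractorWithin_mono i T n.le_succ) h.ge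
  refine (eq_of_ncard_eq _ (Nat.stabilises_of_monotone
    (f := fun n => (G.attractorWithin i T n).ncard) ?_ (fun n => Set.ncard_le_card _)
    (fun n h => ?_) (Nat.le_succ _)).symm).symm
  · exact fun m n hmn => Set.ncard_le_ncard (attractorWithin_mono i T hmn)
  · rwa [attractorWithin_succ i T (n + 1), ← eq_of_ncard_eq n h, ← attractorWithin_succ]

theorem attractor_subset_attractorWithin_card [Finite V] (i : P) (T : Set V) :
    G.attractor i T ⊆ G.attractorWithin i T (Nat.card V) :=
  OrderHom.lfp_le _ ((attractorWithin_succ i T _).symm.trans (attractorWithin_card_succ i T)).le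

open Classical in
/-- A successor of `v` lying in `A` if there is one, and an arbitrary successor otherwise. -/
noncomputable def chooseSucc (G : ReachGame P V) (A : Set V) (v : V) : V :=
  if h : ∃ w ∈ A, G.E v w then h.choose else (G.total v).choose

theorem edge_chooseSucc (A : Set V) (v : V) : G.E v (G.chooseSucc A v) := by
  unfold chooseSucc
  split_ifs with h
  exacts [h.choose_spec.2, (G.total v).choose_spec]

theorem chooseSucc_mem {A : Set V} {v : V} (h : ∃ w ∈ A, G.E v w) : G.chooseSucc A v ∈ A := by
  rw [chooseSucc, dif_pos h]
  exact h.choose_spec.1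

theorem isStrategy_chooseSucc (i : P) (A : List V → Set V) :
    G.IsStrategy i fun h => G.chooseSucc (A h) (G.lastV h) :=
  fun _ _ _ => edge_chooseSucc _ _

theorem mem_of_edge_of_mem_controlPre {i : P} {A : Set V} {v w : V} (hv : v ∈ G.controlPre i A)
    (edge : G.E v w) (hw : G.owner v = i → w = G.chooseSucc A v) : w ∈ A := by
  rcases hv with ⟨owned, exists_succ⟩ | ⟨-, forced⟩
  · exact hw owned ▸ chooseSucc_mem exists_succ
  · exact forced w edge

theorem notMem_of_edge_of_notMem_controlPre {i : P} {A : Set V} {v w : V}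
    (hv : v ∉ G.controlPre i A) (edge : G.E v w)
    (hw : G.owner v ≠ i → w = G.chooseSucc Aᶜ v) : w ∉ A := by
  by_cases owned : G.owner v = i
  · exact fun hwA => hv (.inl ⟨owned, w, hwA, edge⟩)
  · have exists_succ : ∃ u ∈ Aᶜ, G.E v u := by
      by_contra! all_mem
      exact hv (.inr ⟨owned, fun u hu => by_contra fun hA => all_mem u hA hu⟩)
    exact hw owned ▸ chooseSucc_mem exists_succ

theorem exists_mem_of_mem_attractorWithin {i : P} {T : Set V} {ρ : ℕ → V} {m t : ℕ}
    (hm : ρ m ∈ G.attractorWithin i T t)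
    (edge : ∀ k, m ≤ k → k < m + t → G.E (ρ k) (ρ (k + 1)))
    (choice : ∀ k, m ≤ k → k < m + t → G.owner (ρ k) = i →
      ρ (k + 1) = G.chooseSucc (G.attractorWithin i T (m + t - (k + 1))) (ρ k)) :
    ∃ l ≤ m + t, ρ l ∈ T := by
  induction t generalizing m with
  | zero => exact ⟨m, le_rfl, hm⟩
  | succ t ih =>
    rw [attractorWithin_succ] at hm
    rcases hm with hm | hm
    · exact ⟨m, Nat.le_add_right _ _, hm⟩
    · have shift : m + 1 + t = m + (t + 1) := by omega
      have next : ρ (m + 1) ∈ G.attractorWithin i T t := by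
        refine mem_of_edge_of_mem_controlPre hm (edge m le_rfl (by omega)) fun owned => ?_
        have := choice m le_rfl (by omega) owned
        rwa [← shift, Nat.add_sub_cancel_left] at this
      rw [← shift] at edge choice ⊢
      exact ih next (fun k hk => edge k (by omega)) fun k hk => choice k (by omega)

theorem notMem_attractor_of_le {i : P} {T : Set V} {ρ : ℕ → V} {m n : ℕ} (hmn : m ≤ n)
    (hm : ρ m ∉ G.attractor i T)
    (edge : ∀ k, m ≤ k → k < n → G.E (ρ k) (ρ (k + 1)))
    (choice : ∀ k, m ≤ k → k < n → G.owner (ρ k) ≠ i →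
      ρ (k + 1) = G.chooseSucc (G.attractor i T)ᶜ (ρ k)) :
    ρ n ∉ G.attractor i T := by
  induction n, hmn using Nat.le_induction with
  | base => exact hm
  | succ n hmn ih =>
    have hn : ρ n ∉ G.attractor i T :=
      ih (fun k hk hkn => edge k hk (by omega)) fun k hk hkn => choice k hk (by omega)
    rw [attractor_eq, Set.mem_union, not_or] at hn
    exact notMem_of_edge_of_notMem_controlPre hn.2 (edge n hmn n.lt_succ_self)
      (choice n hmn n.lt_succ_self)

theorem IsProfileTrunc.exists_update_reaching [DecidableEq P] {d m t : ℕ} {p : P → List V → V}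
    {i : P} {T : Set V} (hp : G.IsProfileTrunc d p) (hd : m + t ≤ d)
    (hm : G.outcome p m ∈ G.attractorWithin i T t) :
    ∃ σ, G.IsStrategyTrunc d i σ ∧
      ∃ l ≤ m + t, G.outcome (Function.update p i σ) l ∈ T := by
  let attract : List V → V :=
    fun h => G.chooseSucc (G.attractorWithin i T (m + t - h.length)) (G.lastV h)
  have hσ : G.IsStrategyTrunc d i (ReachGame.switchAfter m (p i) attract) :=
    (hp i).switchAfter ((isStrategy_chooseSucc i _).isStrategyTrunc d)
  refine ⟨_, hσ, exists_mem_of_mem_attractorWithin (i := i) ?_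
    (fun k _ hk => (hp.update hσ).edge_outcome (by omega)) fun k hmk _ owned => ?_⟩
  · rwa [outcome_update_switchAfter le_rfl]
  · rw [outcome_succ, owned, Function.update_self, switchAfter_of_lt_length
      (by rw [length_outHist]; omega)]
    simp only [attract, length_outHist]
    rfl

/-! ### Winning regions -/

/-- The vertices from which player `i` can force a visit to his goal set. -/
def winningRegion (G : ReachGame P V) (i : P) : Set V :=
  G.attractor i (G.goal i)

theorem goal_subset_winningRegion (i : P) : G.goal i ⊆ G.winningRegion i := by
  rw [winningRegion, attractor_eq]
  exact Set.subset_union_left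

/-- The positional strategy that keeps the play outside the winning region of player `i`, for use
by his opponents. -/
noncomputable def avoidGoal (G : ReachGame P V) (i : P) (h : List V) : V :=
  G.chooseSucc (G.winningRegion i)ᶜ (G.lastV h)

theorem isStrategy_avoidGoal (i j : P) : G.IsStrategy j (G.avoidGoal i) :=
  isStrategy_chooseSucc j _

theorem IsProfileTrunc.outcome_notMem_winningRegion {m n : ℕ} {q : P → List V → V} {i : P}
    (hq : G.IsProfileTrunc n q)
    (avoid : ∀ j ≠ i, ∀ h : List V, m < h.length → q j h = G.avoidGoal i h)
    (hm : G.outcome q m ∉ G.winningRegion i) (hmn : m ≤ n) :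
    G.outcome q n ∉ G.winningRegion i := by
  refine notMem_attractor_of_le hmn hm (fun k _ hk => hq.edge_outcome hk) fun k hk _ owned => ?_
  rw [outcome_succ, avoid _ owned _ (by rw [length_outHist]; omega)]
  rfl

theorem IsNashTrunc.costList_le_of_mem_winningRegion [DecidableEq P] [Finite V] {d m : ℕ}
    {p : P → List V → V} {i : P} {σ : List V → V} (hp : G.IsProfileTrunc d p)
    (nash : G.IsNashTrunc d p) (hσ : G.IsStrategyTrunc d i σ) (hd : m + Nat.card V ≤ d)
    (hm : G.outcome (Function.update p i σ) m ∈ G.winningRegion i) :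
    G.costList i (G.outHist p d) ≤ (m + Nat.card V : ℕ) := by
  obtain ⟨σ', hσ', l, hl, mem⟩ := (hp.update hσ).exists_update_reaching hd
    (attractor_subset_attractorWithin_card i _ hm)
  rw [Function.update_idem] at mem
  have cost_le : G.cost i (G.outcome (Function.update p i σ')) ≤ (m + Nat.card V : ℕ) :=
    cost_le_coe_iff.2 ⟨l, hl, mem⟩
  refine (nash i σ' hσ').trans ?_
  rwa [costList_outHist_of_le (cost_le.trans (Nat.cast_le.2 hd))]

end Multiplayer

section TwoPlayer

variable {V : Type} {G : ReachGame (Fin 2) V}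

/-! ### Secure equilibria -/

/-- Player `j` does not prefer the cost profile `c'` to `c`: this is `¬ c ≺ⱼ c'`, stated uniformly
for the two players. The opponent of `j` is `1 - j`. -/
def NoGain (j : Fin 2) (c c' : Fin 2 → ℕ∞) : Prop :=
  c j ≤ c' j ∧ (c' j = c j → c' (1 - j) ≤ c (1 - j))

theorem noGain_zero_iff {c c' : Fin 2 → ℕ∞} :
    NoGain 0 c c' ↔ ¬ prec1 (c 0, c 1) (c' 0, c' 1) := by
  simp [NoGain, prec1, eq_comm]

theorem noGain_one_iff {c c' : Fin 2 → ℕ∞} :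
    NoGain 1 c c' ↔ ¬ prec2 (c 0, c 1) (c' 0, c' 1) := by
  simp [NoGain, prec2, eq_comm]

theorem isSecure_iff {p : Fin 2 → List V → V} :
    G.IsSecure p ↔ ∀ j σ, G.IsStrategy j σ →
      NoGain j (G.cost · (G.outcome p)) (G.cost · (G.outcome (Function.update p j σ))) := by
  simp only [Fin.forall_fin_two, noGain_zero_iff, noGain_one_iff]
  rfl

theorem isSecureTrunc_iff {d : ℕ} {p : Fin 2 → List V → V} :
    G.IsSecureTrunc d p ↔ ∀ j σ, G.IsStrategyTrunc d j σ →
      NoGain j (G.costList · (G.outHist p d))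
        (G.costList · (G.outHist (Function.update p j σ) d)) := by
  simp only [Fin.forall_fin_two, noGain_zero_iff, noGain_one_iff]
  rfl

theorem IsSecureTrunc.isNashTrunc {d : ℕ} {p : Fin 2 → List V → V} (secure : G.IsSecureTrunc d p) :
    G.IsNashTrunc d p :=
  fun j σ hσ => (isSecureTrunc_iff.1 secure j σ hσ).1

theorem IsSecureTrunc.costList_update_le_of_eq_top {d : ℕ} {p : Fin 2 → List V → V} {j : Fin 2}
    {σ : List V → V} (secure : G.IsSecureTrunc d p) (hσ : G.IsStrategyTrunc d j σ)
    (infinite : G.costList j (G.outHist p d) = ⊤) :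
    G.costList (1 - j) (G.outHist (Function.update p j σ) d) ≤
      G.costList (1 - j) (G.outHist p d) := by
  have noGain := isSecureTrunc_iff.1 secure j σ hσ
  have own : G.costList j (G.outHist (Function.update p j σ) d) = ⊤ :=
    top_le_iff.1 (infinite.symm.trans_le noGain.1)
  exact noGain.2 (own.trans infinite.symm)

theorem NoGain.of_costList {d : ℕ} {j : Fin 2} {c : Fin 2 → ℕ∞} {q : Fin 2 → List V → V}
    (noGain : NoGain j c (G.costList · (G.outHist q d))) (hc : c j ≤ d) :
    NoGain j c (G.cost · (G.outcome q)) := by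
  obtain ⟨own, other⟩ := noGain
  by_cases le : G.cost j (G.outcome q) ≤ d
  · simp only [costList_outHist_of_le le] at own other
    exact ⟨own, fun eq => (cost_le_costList_outHist _ q d).trans (other eq)⟩
  · have lt : c j < G.cost j (G.outcome q) := hc.trans_lt (not_le.1 le)
    exact ⟨lt.le, fun eq => absurd eq lt.ne'⟩

theorem eq_one_sub_of_ne : ∀ {i j : Fin 2}, i ≠ j → i = 1 - j := by decide

theorem one_sub_ne : ∀ j : Fin 2, 1 - j ≠ j := by decide

variable {d : ℕ} {p : Fin 2 → List V → V}

theorem costList_update_avoidGoal_eq_top {i : Fin 2} (hp : G.IsProfileTrunc d p)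
    (h0 : G.v0 ∉ G.winningRegion i) :
    G.costList i (G.outHist (Function.update p (1 - i) (G.avoidGoal i)) d) = ⊤ := by
  have hq := hp.update ((isStrategy_avoidGoal i (1 - i)).isStrategyTrunc d)
  by_contra finite
  obtain ⟨l, hl, mem⟩ := cost_le_coe_iff.1 (costList_outHist_ne_top_iff.1 finite)
  refine IsProfileTrunc.outcome_notMem_winningRegion (m := 0)
    (fun j h hist len => hq j h hist (len.trans hl)) ?_ h0 l.zero_le
    (goal_subset_winningRegion i mem)
  intro j hj h _
  rw [eq_one_sub_of_ne hj, Function.update_self]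

theorem IsSecureTrunc.costList_le_card [Finite V] {i : Fin 2} (hp : G.IsProfileTrunc d p)
    (secure : G.IsSecureTrunc d p) (hd : Nat.card V ≤ d)
    (other : G.costList (1 - i) (G.outHist p d) = ⊤)
    (own : G.costList i (G.outHist p d) ≠ ⊤) :
    G.costList i (G.outHist p d) ≤ Nat.card V := by
  have h0 : G.v0 ∈ G.winningRegion i := by
    by_contra h0
    have le := secure.costList_update_le_of_eq_top
      ((isStrategy_avoidGoal i (1 - i)).isStrategyTrunc d) other
    rw [sub_sub_cancel, costList_update_avoidGoal_eq_top hp h0, top_le_iff] at le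
    exact own le
  simpa using IsNashTrunc.costList_le_of_mem_winningRegion (m := 0) (σ := p i) hp
    secure.isNashTrunc (hp i) (by omega) h0

/-! ### The punishing profile -/

open Classical in
/-- The time at which player `i` starts to punish his opponent in `punishingProfile`. -/
noncomputable def punishTime (G : ReachGame (Fin 2) V) (d : ℕ) (p : Fin 2 → List V → V)
    (i : Fin 2) : ℕ :=
  if G.costList (1 - i) (G.outHist p d) = ⊤ then Nat.card V else d

/-- The profile in which both players follow `p` until their punishing time and then keep the play
outside the winning region of the opponent. -/
noncomputable def punishingProfile (G : ReachGame (Fin 2) V) (d : ℕ) (p : Fin 2 → List V → V)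
    (i : Fin 2) : List V → V :=
  switchAfter (G.punishTime d p i) (p i) (G.avoidGoal (1 - i))

theorem punishTime_of_eq_top {i : Fin 2} (h : G.costList (1 - i) (G.outHist p d) = ⊤) :
    G.punishTime d p i = Nat.card V :=
  if_pos h

theorem punishTime_of_ne_top {i : Fin 2} (h : G.costList (1 - i) (G.outHist p d) ≠ ⊤) :
    G.punishTime d p i = d :=
  if_neg h

theorem isProfile_punishingProfile (hp : G.IsProfileTrunc d p) (hd : Nat.card V ≤ d) :
    G.IsProfile (G.punishingProfile d p) := by
  have punishTime_le (i : Fin 2) : G.punishTime d p i ≤ d := by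
    unfold punishTime
    split_ifs
    exacts [hd, le_rfl]
  exact fun i => (hp i).isStrategy_switchAfter (punishTime_le i) (isStrategy_avoidGoal _ i)

theorem finiteMemoryProfile_punishingProfile [Finite V] :
    G.FiniteMemoryProfile (G.punishingProfile d p) :=
  fun i => finiteMemory_switchAfter_positional i _ _ _

variable {j : Fin 2} {q : Fin 2 → List V → V}

theorem eq_update_of_length_le_punishTime
    (hqj : q (1 - j) = G.punishingProfile d p (1 - j)) (i : Fin 2) (h : List V)
    (len : h.length ≤ G.punishTime d p (1 - j)) : q i h = Function.update p j (q j) i h := by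
  rcases eq_or_ne i j with rfl | hij
  · rw [Function.update_self]
  · rw [Function.update_of_ne hij]
    obtain rfl := eq_one_sub_of_ne hij
    rw [hqj, punishingProfile, switchAfter_of_length_le len]

theorem IsSecureTrunc.noGain_of_ne_top (secure : G.IsSecureTrunc d p) (hq : G.IsProfile q)
    (hqj : q (1 - j) = G.punishingProfile d p (1 - j))
    (finite : G.costList j (G.outHist p d) ≠ ⊤) :
    NoGain j (G.costList · (G.outHist p d)) (G.cost · (G.outcome q)) := by
  have time : G.punishTime d p (1 - j) = d := punishTime_of_ne_top (by rwa [sub_sub_cancel])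
  have agree : G.outHist q d = G.outHist (Function.update p j (q j)) d :=
    outHist_congr fun i h len => eq_update_of_length_le_punishTime hqj i h (by rwa [time])
  have le : G.cost j (G.outcome p) ≤ d := costList_outHist_ne_top_iff.1 finite
  refine NoGain.of_costList ?_ ((costList_outHist_of_le le).trans_le le)
  rw [agree]
  exact isSecureTrunc_iff.1 secure j (q j) ((hq j).isStrategyTrunc d)

theorem IsSecureTrunc.cost_eq_top_of_eq_top [Finite V] (hd : 2 * Nat.card V ≤ d)
    (hp : G.IsProfileTrunc d p) (secure : G.IsSecureTrunc d p) (hq : G.IsProfile q)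
    (hqj : q (1 - j) = G.punishingProfile d p (1 - j))
    (infinite : G.costList j (G.outHist p d) = ⊤) : G.cost j (G.outcome q) = ⊤ := by
  have time : G.punishTime d p (1 - j) = Nat.card V :=
    punishTime_of_eq_top (by rwa [sub_sub_cancel])
  have early (k : ℕ) (hk : k ≤ Nat.card V) : G.outcome q k ∉ G.winningRegion j := by
    rw [outcome_congr (eq_update_of_length_le_punishTime hqj) (hk.trans_eq time.symm)]
    intro mem
    have le := secure.isNashTrunc.costList_le_of_mem_winningRegion hp
      ((hq j).isStrategyTrunc d) (by omega) mem
    exact (ENat.natCast_lt_top _).not_ge (infinite ▸ le)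
  have avoid (i : Fin 2) (hij : i ≠ j) (h : List V) (len : Nat.card V < h.length) :
      q i h = G.avoidGoal j h := by
    obtain rfl := eq_one_sub_of_ne hij
    rw [hqj, punishingProfile, switchAfter_of_lt_length (by rwa [time]), sub_sub_cancel]
  by_contra finite
  obtain ⟨l, mem⟩ := cost_ne_top_iff.1 finite
  refine absurd (goal_subset_winningRegion j mem) ?_
  rcases le_total l (Nat.card V) with hl | hl
  · exact early l hl
  · exact (hq.isProfileTrunc l).outcome_notMem_winningRegion avoid (early _ le_rfl) hl

theorem IsSecureTrunc.cost_le_of_eq_top [Finite V] (hd : Nat.card V ≤ d)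
    (hp : G.IsProfileTrunc d p) (secure : G.IsSecureTrunc d p) (hq : G.IsProfile q)
    (hqj : q (1 - j) = G.punishingProfile d p (1 - j))
    (infinite : G.costList j (G.outHist p d) = ⊤) :
    G.cost (1 - j) (G.outcome q) ≤ G.costList (1 - j) (G.outHist p d) := by
  by_cases other : G.costList (1 - j) (G.outHist p d) = ⊤
  · exact other ▸ le_top
  have time : G.punishTime d p (1 - j) = Nat.card V :=
    punishTime_of_eq_top (by rwa [sub_sub_cancel])
  have value_le : G.costList (1 - j) (G.outHist p d) ≤ Nat.card V :=
    secure.costList_le_card hp hd (by rwa [sub_sub_cancel]) other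
  have deviation_le : G.cost (1 - j) (G.outcome (Function.update p j (q j))) ≤
      G.costList (1 - j) (G.outHist p d) :=
    (cost_le_costList_outHist _ _ d).trans
      (secure.costList_update_le_of_eq_top ((hq j).isStrategyTrunc d) infinite)
  refine le_trans (cost_le_cost_of_eqOn (fun k hk => ?_) (deviation_le.trans value_le)) deviation_le
  exact (outcome_congr (eq_update_of_length_le_punishTime hqj) (hk.trans_eq time.symm)).symm

theorem IsSecureTrunc.noGain_of_eq_punishingProfile [Finite V] (hd : 2 * Nat.card V ≤ d)
    (hp : G.IsProfileTrunc d p) (secure : G.IsSecureTrunc d p) (hq : G.IsProfile q)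
    (hqj : q (1 - j) = G.punishingProfile d p (1 - j)) :
    NoGain j (G.costList · (G.outHist p d)) (G.cost · (G.outcome q)) := by
  by_cases infinite : G.costList j (G.outHist p d) = ⊤
  · exact ⟨le_top.trans_eq (secure.cost_eq_top_of_eq_top hd hp hq hqj infinite).symm,
      fun _ => secure.cost_le_of_eq_top (by omega) hp hq hqj infinite⟩
  · exact secure.noGain_of_ne_top hq hqj infinite

theorem outHist_punishingProfile (finite : ∀ i, G.costList i (G.outHist p d) ≠ ⊤) :
    G.outHist (G.punishingProfile d p) d = G.outHist p d :=
  outHist_congr fun i _ len => switchAfter_of_length_le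
    (len.trans_eq (punishTime_of_ne_top (finite (1 - i))).symm)

theorem IsSecureTrunc.cost_punishingProfile [Finite V] (hd : 2 * Nat.card V ≤ d)
    (hp : G.IsProfileTrunc d p) (secure : G.IsSecureTrunc d p) (j : Fin 2) :
    G.cost j (G.outcome (G.punishingProfile d p)) = G.costList j (G.outHist p d) := by
  have profile : G.IsProfile (G.punishingProfile d p) :=
    isProfile_punishingProfile hp (by omega)
  have noGain (i : Fin 2) := secure.noGain_of_eq_punishingProfile (j := i) hd hp profile rfl
  refine le_antisymm ?_ (noGain j).1
  by_cases other : G.costList (1 - j) (G.outHist p d) = ⊤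
  · simpa using secure.cost_le_of_eq_top (j := 1 - j) (by omega) hp profile rfl other
  by_cases own : G.costList j (G.outHist p d) = ⊤
  · exact own ▸ le_top
  have finite (i : Fin 2) : G.costList i (G.outHist p d) ≠ ⊤ := by
    rcases eq_or_ne i j with rfl | hij
    exacts [own, eq_one_sub_of_ne hij ▸ other]
  exact outHist_punishingProfile finite ▸ cost_le_costList_outHist j _ d

theorem IsSecureTrunc.isSecure_punishingProfile [Finite V] (hd : 2 * Nat.card V ≤ d)
    (hp : G.IsProfileTrunc d p) (secure : G.IsSecureTrunc d p) :
    G.IsSecure (G.punishingProfile d p) := by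
  refine isSecure_iff.2 fun j σ hσ => ?_
  simp only [secure.cost_punishingProfile hd hp]
  exact secure.noGain_of_eq_punishingProfile hd hp
    ((isProfile_punishingProfile hp (by omega)).update hσ)
    (Function.update_of_ne (one_sub_ne j) _ _)

theorem IsSecureTrunc.typeOf_punishingProfile [Finite V] (hd : 2 * Nat.card V ≤ d)
    (hp : G.IsProfileTrunc d p) (secure : G.IsSecureTrunc d p) :
    G.typeOf (G.punishingProfile d p) = G.typeOfTrunc d p := by
  ext i
  rw [mem_typeOf_iff, mem_typeOfTrunc_iff, secure.cost_punishingProfile hd hp]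

end TwoPlayer

end ReachGame

theorem trunc_secure_to_finiteMemory_secure_general {V : Type} [Finite V]
    (G : ReachGame (Fin 2) V) (d : ℕ) (hd : 2 * Nat.card V ≤ d)
    (prof : Fin 2 → List V → V)
    (hprof : G.IsProfileTrunc d prof) (hsec : G.IsSecureTrunc d prof) :
    ∃ τ : Fin 2 → List V → V,
      G.IsProfile τ ∧ G.FiniteMemoryProfile τ ∧ G.IsSecure τ ∧
      G.typeOf τ = G.typeOfTrunc d prof :=
  ⟨G.punishingProfile d prof,
    ReachGame.isProfile_punishingProfile hprof (by omega),
    ReachGame.finiteMemoryProfile_punishingProfile,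
    hsec.isSecure_punishingProfile hd hprof,
    hsec.typeOf_punishingProfile hd hprof⟩

/-- Let `d ≥ (|Π|+1)·2·|V|`. If the truncated game `G^d` of a
quantitative two-player reachability game `G` has a secure equilibrium of a certain
type, then `G` has a finite-memory secure equilibrium of the same type. -/
theorem trunc_secure_to_finiteMemory_secure {V : Type} [Fintype V]
    (G : ReachGame (Fin 2) V)
    (d : ℕ) (hd : (Fintype.card (Fin 2) + 1) * 2 * Fintype.card V ≤ d)
    (prof : Fin 2 → List V → V)
    (hprof : G.IsProfileTrunc d prof) (hsec : G.IsSecureTrunc d prof) :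
    ∃ τ : Fin 2 → List V → V,
      G.IsProfile τ ∧ G.FiniteMemoryProfile τ ∧ G.IsSecure τ ∧
      G.typeOf τ = G.typeOfTrunc d prof :=
  trunc_secure_to_finiteMemory_secure_general G d
    (by rw [Fintype.card_fin] at hd; rw [Nat.card_eq_fintype_card]; omega) prof hprof hsec
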